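/- Assume in addition 1 − 4a − 2b + 3a² − 6ab > 0, let ε satisfy 0 < ε < (1−3a−2b)/(4a) − c, and put T = [−1 + c + ε, 1 − c − ε]. Then there exist n₀ ∈ ℕ and constants 0 < α ≤ β < ∞ such that α ≤ m_T^{(n₀)}(x, y) ≤ β for all x, y ∈ T. -/

import Mathlib

open MeasureTheory

/-- The triangular density: `f_t(z) = (t − |z|)/t²` for `|z| ≤ t` and `0` otherwise. -/
noncomputable def triangularDensity (t z : ℝ) : ℝ :=
  if |z| ≤ t then (t - |z|) / t ^ 2 else 0

/-- The kernel `m_T(x,y)` of the branching process, with `t = (1−3a−2b)/2`: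
`m_T(x,y) = [a f_t(ay + 1/2 + a/2 − b − x) + 2a f_t(ay − x) + a f_t(ay − 1/2 − a/2 + b − x)]·1_T(y)`. -/
noncomputable def larssonKernel (a b : ℝ) (T : Set ℝ) (x y : ℝ) : ℝ :=
  (a * triangularDensity ((1 - 3 * a - 2 * b) / 2) (a * y + 1 / 2 + a / 2 - b - x) +
      2 * a * triangularDensity ((1 - 3 * a - 2 * b) / 2) (a * y - x) +
      a * triangularDensity ((1 - 3 * a - 2 * b) / 2) (a * y - 1 / 2 - a / 2 + b - x)) *
    Set.indicator T (fun _ => (1 : ℝ)) y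

/-- The iterated kernels, with the index shifted by one:
`larssonKernelIter a b T n = m_T^{(n+1)}`, i.e. `larssonKernelIter a b T 0 = m_T^{(1)} = m_T`
and `m_T^{(n+1)}(x,y) = ∫_T m_T^{(n)}(x,z) m_T(z,y) dz`. -/
noncomputable def larssonKernelIter (a b : ℝ) (T : Set ℝ) : ℕ → ℝ → ℝ → ℝ
  | 0 => larssonKernel a b T
  | (n + 1) => fun x y => ∫ z in T, larssonKernelIter a b T n x z * larssonKernel a b T z y

/-!
For `y ∈ T`, the kernel is positive at `(z, y)` as soon as `|a y + k d - z| < t` for some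
`k ∈ {-1, 0, 1}`, where `d = 1/2 + a/2 - b` and `t = (1 - 3a - 2b)/2`. Fix `x` and suppose that the
`n`-th iterate `m(x, ·)` is positive on `[u, v] ⊆ T`. For each `k`, the points `z` that lead to some
`y ∈ T` form a window centred at `k d`, and the bounds on `ε` say precisely that the three windows
overlap and cover `T` with room to spare. Hence one of them contains a third of `[u, v]`, which the
next step stretches by the factor `1 / a ≥ 3` and lengthens by a fixed amount unless it reaches the
boundary of `T`. So the interval of positivity grows until it fills `T`, and then the iterate is a
positive continuous function on the compact set `T × T`.
-/

open Set

theorem exists_pos_bounds_of_isCompact {X : Type*} [TopologicalSpace X] {s : Set X} {f : X → ℝ}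
    (hs : IsCompact s) (hf : ContinuousOn f s) (hpos : ∀ x ∈ s, 0 < f x) :
    ∃ α β : ℝ, 0 < α ∧ α ≤ β ∧ ∀ x ∈ s, α ≤ f x ∧ f x ≤ β := by
  obtain ⟨α, hα, hαf⟩ := hs.exists_forall_le' hf hpos
  obtain ⟨β, hβ⟩ := hs.bddAbove_image hf
  exact ⟨α, max α β, hα, le_max_left α β, fun x hx =>
    ⟨hαf x hx, (hβ (mem_image_of_mem f hx)).trans (le_max_right α β)⟩⟩

theorem setIntegral_pos_of_mem_closure_interior {X : Type*} [TopologicalSpace X] [MeasurableSpace X]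
    [OpensMeasurableSpace X] {μ : Measure X} [IsLocallyFiniteMeasure μ] [μ.IsOpenPosMeasure]
    {T : Set X} {f : X → ℝ} (hf : Continuous f) (hf₀ : 0 ≤ f) (hT : IsCompact T) {z : X}
    (hz : z ∈ closure (interior T)) (hfz : 0 < f z) : 0 < ∫ x in T, f x ∂μ := by
  rw [setIntegral_pos_iff_support_of_nonneg_ae (ae_of_all _ hf₀)
    (hf.locallyIntegrable.integrableOn_isCompact hT)]
  obtain ⟨w, hw⟩ := mem_closure_iff.1 hz _ hf.isOpen_support hfz.ne'
  exact ((hf.isOpen_support.inter isOpen_interior).measure_pos μ ⟨w, hw⟩).trans_le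
    (measure_mono (inter_subset_inter_right _ interior_subset))

section IteratedKernel

variable {X : Type*} [MeasurableSpace X]

/-- The iterates of an integral kernel `K` with respect to a measure `μ`. As for
`larssonKernelIter`, the index is shifted: `iteratedKernel μ K n` is the `(n + 1)`-fold
composition of `K` with itself. -/
noncomputable def iteratedKernel (μ : Measure X) (K : X → X → ℝ) : ℕ → X → X → ℝ
  | 0 => K
  | n + 1 => fun x y => ∫ z, iteratedKernel μ K n x z * K z y ∂μ

theorem iteratedKernel_nonneg {μ : Measure X} {K : X → X → ℝ} (hK : ∀ x y, 0 ≤ K x y)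
    (n : ℕ) (x y : X) : 0 ≤ iteratedKernel μ K n x y := by
  induction n generalizing y with
  | zero => exact hK x y
  | succ n ih => exact integral_nonneg fun z => mul_nonneg (ih z) (hK z y)

variable [TopologicalSpace X] [OpensMeasurableSpace X] [FirstCountableTopology X]
  [LocallyCompactSpace X] {μ : Measure X} [IsLocallyFiniteMeasure μ] {K : X → X → ℝ} {T : Set X}

theorem continuous_uncurry_iteratedKernel (hK : Continuous K.uncurry) (hT : IsCompact T) (n : ℕ) :
    Continuous (iteratedKernel (μ.restrict T) K n).uncurry := by
  induction n with
  | zero => exact hK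
  | succ n ih =>
    refine continuous_parametric_integral_of_continuous
      (f := fun (p : X × X) z => iteratedKernel (μ.restrict T) K n p.1 z * K z p.2) ?_ hT
    exact (ih.comp (by fun_prop : Continuous fun q : (X × X) × X => (q.1.1, q.2))).mul
      (hK.comp (by fun_prop : Continuous fun q : (X × X) × X => (q.2, q.1.2)))

theorem iteratedKernel_succ_pos [μ.IsOpenPosMeasure] (hK : Continuous K.uncurry)
    (hK₀ : ∀ x y, 0 ≤ K x y) (hT : IsCompact T) {n : ℕ} {x y z : X}
    (hz : z ∈ closure (interior T)) (hxz : 0 < iteratedKernel (μ.restrict T) K n x z)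
    (hzy : 0 < K z y) : 0 < iteratedKernel (μ.restrict T) K (n + 1) x y := by
  refine setIntegral_pos_of_mem_closure_interior ?_
    (fun w => mul_nonneg (iteratedKernel_nonneg hK₀ n x w) (hK₀ w y)) hT hz (mul_pos hxz hzy)
  exact ((continuous_uncurry_iteratedKernel hK hT n).uncurry_left x).mul (hK.uncurry_right y)

end IteratedKernel

section Strips

theorem exists_mem_Icc_abs_sub_le {p q w τ : ℝ} (hpq : p ≤ q) (hτ : 0 ≤ τ) (hp : p - τ ≤ w)
    (hq : w ≤ q + τ) : ∃ z ∈ Icc p q, |w - z| ≤ τ :=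
  ⟨max p (min q w), ⟨le_max_left _ _, by grind⟩, by grind⟩

theorem exists_Icc_forall_exists_abs_mul_sub_le {a L δ τ p q : ℝ} (ha : 0 < a) (ha3 : 3 * a ≤ 1)
    (hL : 0 ≤ L) (hδ : 0 ≤ δ) (hδτ : δ ≤ τ) (hpq : p ≤ q) (hp : -(a * L + (τ - δ)) ≤ p)
    (hq : q ≤ a * L + (τ - δ)) :
    ∃ u v, -L ≤ u ∧ u ≤ v ∧ v ≤ L ∧ min (2 * L) (3 * (q - p) + δ) ≤ v - u ∧
      ∀ y ∈ Icc u v, ∃ z ∈ Icc p q, |a * y - z| ≤ τ := by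
  have hgrowth : a * (3 * (q - p) + δ) ≤ q - p + δ := by
    linarith [mul_le_of_le_one_left (sub_nonneg.2 hpq) ha3,
      mul_le_of_le_one_left hδ (by linarith : a ≤ 1)]
  have hright : 3 * (q - p) + δ ≤ (q + τ) / a + L := by
    rw [← sub_le_iff_le_add, le_div_iff₀' ha]; linarith
  have hleft : 3 * (q - p) + δ ≤ L - (p - τ) / a := by
    rw [le_sub_comm, div_le_iff₀' ha]; linarith
  have hboth : 3 * (q - p) + δ ≤ (q + τ) / a - (p - τ) / a := by
    rw [← sub_div, le_div_iff₀' ha]; linarith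
  have hlength : min (2 * L) (3 * (q - p) + δ) ≤
      min L ((q + τ) / a) - max (-L) ((p - τ) / a) := by
    grind
  have hlength_nonneg : 0 ≤ min (2 * L) (3 * (q - p) + δ) :=
    le_min (by linarith) (by linarith)
  refine ⟨_, _, le_max_left _ _, by linarith, min_le_left _ _, hlength, fun y hy => ?_⟩
  obtain ⟨-, hpy⟩ := max_le_iff.1 hy.1
  obtain ⟨-, hyq⟩ := le_min_iff.1 hy.2
  rw [div_le_iff₀' ha] at hpy
  rw [le_div_iff₀' ha] at hyq
  exact exists_mem_Icc_abs_sub_le hpq (hδ.trans hδτ) hpy hyq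

theorem exists_third_in_window {d r L u v : ℝ} (hdr : d ≤ 2 * r) (hLr : L ≤ d + r)
    (hu : -L ≤ u) (huv : u ≤ v) (hv : v ≤ L) :
    ∃ (k : SignType) (p q : ℝ), u ≤ p + k * d ∧ q + k * d ≤ v ∧ q - p = (v - u) / 3 ∧
      -r ≤ p ∧ q ≤ r := by
  by_cases hleft : u + (v - u) / 3 ≤ -r
  · exact ⟨-1, u + d, u + (v - u) / 3 + d, by simp,
      by simp only [SignType.coe_neg_one]; linarith, by ring, by linarith, by linarith⟩
  by_cases hright : r ≤ v - (v - u) / 3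
  · exact ⟨1, v - (v - u) / 3 - d, v - d, by simp only [SignType.coe_one]; linarith, by simp,
      by ring, by linarith, by linarith⟩
  exact ⟨0, u + (v - u) / 3, v - (v - u) / 3, by simp only [SignType.coe_zero]; linarith,
    by simp only [SignType.coe_zero]; linarith, by ring, by linarith, by linarith⟩

theorem exists_Icc_reachable_of_Icc {a d L δ τ u v : ℝ} (ha : 0 < a) (ha3 : 3 * a ≤ 1)
    (hδ : 0 ≤ δ) (hδτ : δ ≤ τ) (hoverlap : d ≤ 2 * (a * L + (τ - δ)))
    (hcover : L ≤ d + (a * L + (τ - δ))) (hu : -L ≤ u) (huv : u ≤ v) (hv : v ≤ L) :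
    ∃ u' v', -L ≤ u' ∧ u' ≤ v' ∧ v' ≤ L ∧ min (2 * L) (v - u + δ) ≤ v' - u' ∧
      ∀ y ∈ Icc u' v', ∃ z ∈ Icc u v, ∃ k : SignType, |a * y + k * d - z| ≤ τ := by
  obtain ⟨k, p, q, hup, hqv, hpq, hp, hq⟩ := exists_third_in_window hoverlap hcover hu huv hv
  obtain ⟨u', v', hu', huv', hv', hlength, hreach⟩ :=
    exists_Icc_forall_exists_abs_mul_sub_le ha ha3 (by linarith) hδ hδτ (by linarith) hp hq
  rw [hpq, mul_div_cancel₀ _ three_ne_zero] at hlength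
  refine ⟨u', v', hu', huv', hv', hlength, fun y hy => ?_⟩
  obtain ⟨z, hz, hyz⟩ := hreach y hy
  refine ⟨z + k * d, ⟨by linarith [hz.1], by linarith [hz.2]⟩, k, ?_⟩
  rwa [add_sub_add_right_eq_sub]

variable {K : ℝ → ℝ → ℝ} {a d : ℝ}

theorem exists_Icc_iteratedKernel_pos {L δ τ : ℝ} (hK : Continuous K.uncurry)
    (hK₀ : ∀ x y, 0 ≤ K x y)
    (hstrip : ∀ (k : SignType) (x y : ℝ), |a * y + k * d - x| ≤ τ → 0 < K x y)
    (ha : 0 < a) (ha3 : 3 * a ≤ 1) (hL : 0 < L) (hδ : 0 ≤ δ) (hδτ : δ ≤ τ)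
    (hoverlap : d ≤ 2 * (a * L + (τ - δ))) (hcover : L ≤ d + (a * L + (τ - δ)))
    (n : ℕ) {x : ℝ} (hx : x ∈ Icc (-L) L) :
    ∃ u v, -L ≤ u ∧ u ≤ v ∧ v ≤ L ∧ min (2 * L) (n * δ) ≤ v - u ∧
      ∀ y ∈ Icc u v, 0 < iteratedKernel (volume.restrict (Icc (-L) L)) K n x y := by
  induction n with
  | zero =>
    obtain ⟨u, v, hu, huv, hv, -, hreach⟩ :=
      exists_Icc_reachable_of_Icc ha ha3 hδ hδτ hoverlap hcover hx.1 le_rfl hx.2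
    refine ⟨u, v, hu, huv, hv, by simp [huv], fun y hy => ?_⟩
    obtain ⟨z, hz, k, hyz⟩ := hreach y hy
    obtain rfl : z = x := by simpa using hz
    exact hstrip k z y hyz
  | succ n ih =>
    obtain ⟨u, v, hu, huv, hv, hlength, hpos⟩ := ih
    obtain ⟨u', v', hu', huv', hv', hlength', hreach⟩ :=
      exists_Icc_reachable_of_Icc ha ha3 hδ hδτ hoverlap hcover hu huv hv
    refine ⟨u', v', hu', huv', hv', ?_, fun y hy => ?_⟩
    · push_cast
      grind
    · obtain ⟨z, hz, k, hyz⟩ := hreach y hy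
      refine iteratedKernel_succ_pos hK hK₀ isCompact_Icc ?_ (hpos z hz) (hstrip k z y hyz)
      rw [closure_interior_Icc (by linarith)]
      exact Icc_subset_Icc hu hv hz

theorem exists_iteratedKernel_pos_on_Icc {L t : ℝ} (hK : Continuous K.uncurry)
    (hK₀ : ∀ x y, 0 ≤ K x y)
    (hstrip : ∀ (k : SignType) (x y : ℝ), |a * y + k * d - x| < t → 0 < K x y)
    (ha : 0 < a) (ha3 : 3 * a ≤ 1) (ht : 0 < t) (hoverlap : d < 2 * (a * L + t))
    (hcover : L < d + (a * L + t)) :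
    ∃ n : ℕ, ∀ x ∈ Icc (-L) L, ∀ y ∈ Icc (-L) L,
      0 < iteratedKernel (volume.restrict (Icc (-L) L)) K n x y := by
  rcases le_or_gt L 0 with hL | hL
  · refine ⟨0, fun x hx y hy => hstrip 0 x y ?_⟩
    obtain rfl : x = 0 := by linarith [hx.1, hx.2]
    obtain rfl : y = 0 := by linarith [hy.1, hy.2]
    simpa using ht
  obtain ⟨δ, hδ, hδt, hδoverlap, hδcover⟩ : ∃ δ > 0, 2 * δ ≤ t ∧
      d ≤ 2 * (a * L + (t - δ - δ)) ∧ L ≤ d + (a * L + (t - δ - δ)) := by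
    refine ⟨min t (min (2 * (a * L + t) - d) (d + (a * L + t) - L)) / 4, ?_, ?_⟩ <;> grind
  obtain ⟨n, hn⟩ := exists_nat_ge (2 * L / δ)
  rw [div_le_iff₀ hδ] at hn
  refine ⟨n, fun x hx y hy => ?_⟩
  obtain ⟨u, v, hu, -, hv, hlength, hpos⟩ :=
    exists_Icc_iteratedKernel_pos hK hK₀ (fun k x y h => hstrip k x y (by linarith)) ha ha3 hL
      hδ.le (by linarith) hδoverlap hδcover n hx
  rw [min_eq_left hn] at hlength
  exact hpos y ⟨by linarith [hy.1], by linarith [hy.2]⟩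

end Strips

section LarssonKernel

theorem triangularDensity_eq_max (t z : ℝ) : triangularDensity t z = max 0 (t - |z|) / t ^ 2 := by
  rw [triangularDensity]
  split_ifs with hz
  · rw [max_eq_right (by linarith)]
  · rw [max_eq_left (by linarith), zero_div]

@[fun_prop]
theorem continuous_triangularDensity (t : ℝ) : Continuous (triangularDensity t) := by
  simp only [funext (triangularDensity_eq_max t)]
  fun_prop

theorem triangularDensity_nonneg (t z : ℝ) : 0 ≤ triangularDensity t z := by
  rw [triangularDensity_eq_max]
  positivity

theorem triangularDensity_pos {t z : ℝ} (hz : |z| < t) : 0 < triangularDensity t z := by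
  rw [triangularDensity, if_pos hz.le]
  have : 0 < t := (abs_nonneg z).trans_lt hz
  exact div_pos (sub_pos.2 hz) (by positivity)

variable {a b : ℝ} {T : Set ℝ}

theorem larssonKernel_eq_univ_of_mem {y : ℝ} (hy : y ∈ T) (x : ℝ) :
    larssonKernel a b T x y = larssonKernel a b univ x y := by
  simp only [larssonKernel, indicator_of_mem hy, indicator_univ]

theorem continuous_uncurry_larssonKernel_univ (a b : ℝ) :
    Continuous (larssonKernel a b univ).uncurry := by
  simp only [Function.uncurry_def, larssonKernel, indicator_univ]
  fun_prop

theorem larssonKernel_nonneg (ha : 0 ≤ a) (x y : ℝ) : 0 ≤ larssonKernel a b T x y := by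
  have hf := triangularDensity_nonneg ((1 - 3 * a - 2 * b) / 2)
  refine mul_nonneg ?_ (indicator_nonneg (fun _ _ => zero_le_one) y)
  have hright := hf (a * y + 1 / 2 + a / 2 - b - x)
  have hmid := hf (a * y - x)
  have hleft := hf (a * y - 1 / 2 - a / 2 + b - x)
  positivity

theorem larssonKernel_pos (ha : 0 < a) {x y : ℝ} (hy : y ∈ T) (k : SignType)
    (hxy : |a * y + k * (1 / 2 + a / 2 - b) - x| < (1 - 3 * a - 2 * b) / 2) :
    0 < larssonKernel a b T x y := by
  have hf := triangularDensity_nonneg ((1 - 3 * a - 2 * b) / 2)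
  have hright := hf (a * y + 1 / 2 + a / 2 - b - x)
  have hmid := hf (a * y - x)
  have hleft := hf (a * y - 1 / 2 - a / 2 + b - x)
  have hk := triangularDensity_pos hxy
  rw [larssonKernel, indicator_of_mem hy, mul_one]
  obtain rfl | rfl | rfl := SignType.trichotomy k
  · rw [show a * y + (-1 : SignType) * (1 / 2 + a / 2 - b) - x =
      a * y - 1 / 2 - a / 2 + b - x by rw [SignType.coe_neg_one]; ring] at hk
    positivity
  · rw [show a * y + (0 : SignType) * (1 / 2 + a / 2 - b) - x = a * y - x by simp] at hk
    positivity
  · rw [show a * y + (1 : SignType) * (1 / 2 + a / 2 - b) - x =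
      a * y + 1 / 2 + a / 2 - b - x by rw [SignType.coe_one]; ring] at hk
    positivity

theorem larssonKernelIter_eq_iteratedKernel (hT : MeasurableSet T) (n : ℕ) (x : ℝ) {y : ℝ}
    (hy : y ∈ T) : larssonKernelIter a b T n x y =
      iteratedKernel (volume.restrict T) (larssonKernel a b univ) n x y := by
  induction n generalizing y with
  | zero => exact larssonKernel_eq_univ_of_mem hy x
  | succ n ih =>
    refine setIntegral_congr_fun hT fun z hz => ?_
    simp only [ih hz, larssonKernel_eq_univ_of_mem hy]

theorem exists_larssonKernelIter_bounds {L : ℝ} (ha : 0 < a) (ha3 : 3 * a ≤ 1)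
    (hoverlap : 4 * a * (1 - L) < 1 - 3 * a - 2 * b)
    (hcover : (1 - a) * L < 1 - a - 2 * b) :
    ∃ n : ℕ, ∃ α β : ℝ, 0 < α ∧ α ≤ β ∧ ∀ x ∈ Icc (-L) L, ∀ y ∈ Icc (-L) L,
      α ≤ larssonKernelIter a b (Icc (-L) L) n x y ∧
        larssonKernelIter a b (Icc (-L) L) n x y ≤ β := by
  have hsimple : 0 < 1 - 4 * a - 2 * b + 3 * a ^ 2 - 6 * a * b := by
    linarith [mul_lt_mul_of_pos_right hoverlap (by linarith : 0 < 1 - a),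
      mul_lt_mul_of_pos_left hcover (by linarith : 0 < 4 * a)]
  have hradius : 0 < 1 - 3 * a - 2 * b := by
    refine pos_of_mul_pos_left (b := 1 + 3 * a) ?_ (by linarith)
    linarith [mul_nonneg ha.le (sub_nonneg.2 ha3)]
  have hK := continuous_uncurry_larssonKernel_univ a b
  obtain ⟨n, hpos⟩ := exists_iteratedKernel_pos_on_Icc (L := L) hK (larssonKernel_nonneg ha.le)
    (fun k x y => larssonKernel_pos ha (mem_univ y) k) ha ha3 (by linarith) (by linarith)
    (by linarith)
  obtain ⟨α, β, hα, hαβ, hbounds⟩ := exists_pos_bounds_of_isCompact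
    (isCompact_Icc.prod isCompact_Icc)
    (continuous_uncurry_iteratedKernel hK isCompact_Icc n).continuousOn
    fun p hp => hpos p.1 hp.1 p.2 hp.2
  refine ⟨n, α, β, hα, hαβ, fun x hx y hy => ?_⟩
  rw [larssonKernelIter_eq_iteratedKernel measurableSet_Icc n x hy]
  exact hbounds (x, y) ⟨hx, hy⟩

end LarssonKernel

theorem kernel_iterate_uniformly_bounded_simple_case_general
    (a b : ℝ) (ha : 0 < a) (ha3 : 3 * a ≤ 1) (c : ℝ) (hc : c = 2 * b / (1 - a))
    (ε : ℝ) (hε : 0 < ε) (hε' : ε < (1 - 3 * a - 2 * b) / (4 * a) - c)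
    (T : Set ℝ) (hT : T = Icc (-1 + c + ε) (1 - c - ε)) :
    ∃ n₀ : ℕ, ∃ α β : ℝ, 0 < α ∧ α ≤ β ∧
      ∀ x ∈ T, ∀ y ∈ T,
        α ≤ larssonKernelIter a b T n₀ x y ∧ larssonKernelIter a b T n₀ x y ≤ β := by
  have h1a : 0 < 1 - a := by linarith
  have hb : 2 * b = c * (1 - a) := by rw [hc, div_mul_cancel₀ _ h1a.ne']
  have hoverlap : (c + ε) * (4 * a) < 1 - 3 * a - 2 * b := by
    rw [← lt_div_iff₀ (by linarith)]
    linarith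
  have hcover : 0 < ε * (1 - a) := mul_pos hε h1a
  obtain rfl : T = Icc (-(1 - c - ε)) (1 - c - ε) := by rw [hT]; ring_nf
  exact exists_larssonKernelIter_bounds ha ha3 (by linarith) (by linarith)

/-- In the simple case `1 − 4a − 2b + 3a² − 6ab > 0`, with `T = [−1 + c + ε, 1 − c − ε]`,
some iterate of the kernel is bounded between positive constants on `T × T`.
(Recall `larssonKernelIter a b T n = m_T^{(n+1)}`.) -/
theorem kernel_iterate_uniformly_bounded_simple_case
    (a b : ℝ) (ha : 1 / 4 < a) (hb : 0 < b) (hab : 3 * a + 2 * b < 1)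
    (c : ℝ) (hc : c = 2 * b / (1 - a))
    (hsimple : 0 < 1 - 4 * a - 2 * b + 3 * a ^ 2 - 6 * a * b)
    (ε : ℝ) (hε : 0 < ε) (hε' : ε < (1 - 3 * a - 2 * b) / (4 * a) - c)
    (T : Set ℝ) (hT : T = Set.Icc (-1 + c + ε) (1 - c - ε)) :
    ∃ n₀ : ℕ, ∃ α β : ℝ, 0 < α ∧ α ≤ β ∧
      ∀ x ∈ T, ∀ y ∈ T,
        α ≤ larssonKernelIter a b T n₀ x y ∧ larssonKernelIter a b T n₀ x y ≤ β :=
  kernel_iterate_uniformly_bounded_simple_case_general a b (by linarith) (by linarith)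
    c hc ε hε hε' T hT
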